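/- (TW transformation.) Let V be a finite vertex type, G a simple graph on V with edge-weight function w : Sym2 V → ℝ, and let x, y, z be distinct vertices such that G.Adj x y, G.Adj y z, ¬G.Adj x z, and w({x,y}) ≥ w({y,z}). Let G' be the graph obtained from G by deleting the edge {x,y} and adding the edge {x,z}, with weight function w' agreeing with w on all edges except that w'({x,z}) = w({x,y}). Then G' is path-max equivalent to G: for all vertices u and v, u and v are connected in G' iff they are connected in G, and in that case PathMax_{G'}(u,v) = PathMax_G(u,v). -/

import Mathlib

/-- The maximum edge weight on a walk `p` (as the supremum of the weights of
its edges). -/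
noncomputable def walkMax {V : Type*} {G : SimpleGraph V} (w : Sym2 V → ℝ)
    {u v : V} (p : G.Walk u v) : ℝ :=
  sSup (w '' {e | e ∈ p.edges})

/-- `pathMax G w u v` is the minimum, over all paths `P` from `u` to `v` in
`G`, of the maximum edge weight on `P`. -/
noncomputable def pathMax {V : Type*} (G : SimpleGraph V) (w : Sym2 V → ℝ)
    (u v : V) : ℝ :=
  sInf {m | ∃ p : G.Walk u v, p.IsPath ∧ m = walkMax w p}

/-!
For `u ≠ v`, `PathMax(u, v)` is the infimum of the thresholds `t` at which `u` and `v` are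
connected by edges of weight at most `t`, so two weighted graphs with the same connectivity relation
are path-max equivalent as soon as their sublevel graphs have the same connectivity relation at
every threshold. Because `w {y,z} ≤ w {x,y}`, at a threshold below `w {x,y}` the transformation
changes nothing, while at any other threshold it acts on the sublevel graph as the unweighted
exchange of `{x,y}` for `{x,z}`, which preserves connectivity since `{y,z}` is still present.
-/

open SimpleGraph

theorem csInf_upperClosure {α : Type*} [ConditionallyCompleteLinearOrder α] (s : Set α) :
    sInf (upperClosure s : Set α) = sInf s := by
  rcases s.eq_empty_or_nonempty with rfl | hs
  · simp
  by_cases hb : BddBelow s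
  · refine IsGLB.csInf_eq ?_ (hs.mono subset_upperClosure)
    rw [IsGLB, lowerBounds_upperClosure]
    exact isGLB_csInf hs hb
  · rw [csInf_of_not_bddBelow hb, csInf_of_not_bddBelow (mt bddBelow_upperClosure.1 hb)]

section Reachability

variable {V : Type*} {G H : SimpleGraph V} {x y z u v : V}

theorem reachable_le_of_adj_le_reachable (h : G.Adj ≤ H.Reachable) :
    G.Reachable ≤ H.Reachable := by
  rw [reachable_eq_reflTransGen]
  exact Relation.reflTransGen_le_of_equivalence_of_le H.reachable_is_equivalence h

/-- The graph underlying the TW transformation: the edge `{x,y}` is replaced by `{x,z}`. For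
`x = z` nothing is added, since `SimpleGraph.fromEdgeSet` discards loops. -/
def twTransform (G : SimpleGraph V) (x y z : V) : SimpleGraph V :=
  fromEdgeSet ((G.edgeSet \ {s(x, y)}) ∪ {s(x, z)})

theorem edgeSet_twTransform (hxz : x ≠ z) :
    (twTransform G x y z).edgeSet = (G.edgeSet \ {s(x, y)}) ∪ {s(x, z)} := by
  rw [twTransform, edgeSet_fromEdgeSet, sdiff_eq_left, Set.disjoint_union_left,
    Set.disjoint_singleton_left]
  exact ⟨(Set.subset_compl_iff_disjoint_right.1 G.edgeSet_subset_compl_diagSet).mono_left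
    Set.sdiff_subset, hxz⟩

theorem twTransform_adj (hxz : x ≠ z) :
    (twTransform G x y z).Adj u v ↔
      G.Adj u v ∧ s(u, v) ≠ s(x, y) ∨ s(u, v) = s(x, z) := by
  rw [← mem_edgeSet, edgeSet_twTransform hxz]
  rfl

theorem reachable_twTransform (hxz : x ≠ z) (hxy : G.Adj x y) (hyz : G.Adj y z) :
    (twTransform G x y z).Reachable = G.Reachable := by
  apply le_antisymm <;> refine reachable_le_of_adj_le_reachable fun a b hab ↦ ?_
  · have reach : G.Reachable x z := hxy.reachable.trans hyz.reachable
    rcases (twTransform_adj hxz).1 hab with ⟨hab, -⟩ | hab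
    · exact hab.reachable
    · rcases Sym2.eq_iff.1 hab with ⟨rfl, rfl⟩ | ⟨rfl, rfl⟩
      exacts [reach, reach.symm]
  · have adj_xz : (twTransform G x y z).Adj x z := (twTransform_adj hxz).2 (.inr rfl)
    have adj_zy : (twTransform G x y z).Adj z y :=
      (twTransform_adj hxz).2 (.inl ⟨hyz.symm, by simp [hxz.symm, hyz.ne']⟩)
    have reach := adj_xz.reachable.trans adj_zy.reachable
    by_cases h : s(a, b) = s(x, y)
    · rcases Sym2.eq_iff.1 h with ⟨rfl, rfl⟩ | ⟨rfl, rfl⟩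
      exacts [reach, reach.symm]
    · exact ((twTransform_adj hxz).2 (.inl ⟨hab, h⟩)).reachable

end Reachability

section SublevelGraph

variable {V α : Type*} [LinearOrder α] {G : SimpleGraph V} {w w' : Sym2 V → α} {t : α}
  {x y z u v : V}

/-- The sublevel graph of a weighted graph at threshold `t`: its edges of weight at most `t`. -/
def sublevelGraph (G : SimpleGraph V) (w : Sym2 V → α) (t : α) : SimpleGraph V :=
  G.deleteEdges {e | t < w e}

theorem mem_edgeSet_sublevelGraph {e : Sym2 V} :
    e ∈ (sublevelGraph G w t).edgeSet ↔ e ∈ G.edgeSet ∧ w e ≤ t := by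
  simp [sublevelGraph]

theorem reachable_sublevelGraph_iff_exists_isPath :
    (sublevelGraph G w t).Reachable u v ↔
      ∃ p : G.Walk u v, p.IsPath ∧ ∀ e ∈ p.edges, w e ≤ t := by
  constructor
  · intro h
    obtain ⟨p, hp⟩ := h.exists_isPath
    have hle : sublevelGraph G w t ≤ G := G.deleteEdges_le _
    refine ⟨p.mapLe hle, hp.mapLe hle, fun e he ↦ ?_⟩
    rw [Walk.edges_mapLe_eq_edges] at he
    exact (mem_edgeSet_sublevelGraph.1 (p.edges_subset_edgeSet he)).2
  · rintro ⟨p, -, hp⟩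
    exact (p.transfer _ fun e he ↦
      mem_edgeSet_sublevelGraph.2 ⟨p.edges_subset_edgeSet he, hp e he⟩).reachable

theorem sublevelGraph_twTransform_of_le (hxz : x ≠ z) (hnew : w' s(x, z) = w s(x, y))
    (hold : ∀ e, e ≠ s(x, z) → w' e = w e) (ht : w s(x, y) ≤ t) :
    sublevelGraph (twTransform G x y z) w' t = twTransform (sublevelGraph G w t) x y z := by
  rw [← edgeSet_inj]
  ext e
  simp only [mem_edgeSet_sublevelGraph, edgeSet_twTransform hxz, Set.mem_union, Set.mem_sdiff,
    Set.mem_singleton_iff]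
  rcases eq_or_ne e s(x, z) with rfl | he
  · simp [hnew, ht]
  · simp [he, hold e he, and_right_comm]

theorem sublevelGraph_twTransform_of_lt (hxz : x ≠ z) (hnxz : ¬ G.Adj x z)
    (hnew : w' s(x, z) = w s(x, y)) (hold : ∀ e, e ≠ s(x, z) → w' e = w e)
    (ht : t < w s(x, y)) :
    sublevelGraph (twTransform G x y z) w' t = sublevelGraph G w t := by
  rw [← mem_edgeSet] at hnxz
  rw [← edgeSet_inj]
  ext e
  simp only [mem_edgeSet_sublevelGraph, edgeSet_twTransform hxz, Set.mem_union, Set.mem_sdiff,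
    Set.mem_singleton_iff]
  rcases eq_or_ne e s(x, z) with rfl | he
  · simp [hnew, ht.not_ge, hnxz]
  · have ne_of_le : w e ≤ t → e ≠ s(x, y) := by
      rintro h rfl
      exact ht.not_ge h
    simp only [he, or_false, hold e he, and_assoc, and_iff_right_of_imp ne_of_le]

theorem reachable_sublevelGraph_twTransform (hxz : x ≠ z) (hxy : G.Adj x y) (hyz : G.Adj y z)
    (hnxz : ¬ G.Adj x z) (hle : w s(y, z) ≤ w s(x, y)) (hnew : w' s(x, z) = w s(x, y))
    (hold : ∀ e, e ≠ s(x, z) → w' e = w e) (t : α) :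
    (sublevelGraph (twTransform G x y z) w' t).Reachable = (sublevelGraph G w t).Reachable := by
  rcases le_or_gt (w s(x, y)) t with ht | ht
  · rw [sublevelGraph_twTransform_of_le hxz hnew hold ht]
    exact reachable_twTransform hxz (mem_edgeSet_sublevelGraph.2 ⟨hxy, ht⟩)
      (mem_edgeSet_sublevelGraph.2 ⟨hyz, hle.trans ht⟩)
  · rw [sublevelGraph_twTransform_of_lt hxz hnxz hnew hold ht]

end SublevelGraph

section PathMax

variable {V : Type*} {G H : SimpleGraph V} {w w' : Sym2 V → ℝ} {u v : V}

theorem walkMax_le_iff {p : G.Walk u v} (hp : ¬ p.Nil) {t : ℝ} :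
    walkMax w p ≤ t ↔ ∀ e ∈ p.edges, w e ≤ t := by
  have nonempty : {e | e ∈ p.edges}.Nonempty :=
    List.exists_mem_of_ne_nil _ (mt Walk.edges_eq_nil.1 hp)
  rw [walkMax, csSup_le_iff ((List.finite_toSet p.edges).image w).bddAbove (nonempty.image w)]
  exact Set.forall_mem_image

/-- The value `0` comes from the empty path, whose `walkMax` is `sSup ∅ = 0` by convention. -/
theorem pathMax_self (G : SimpleGraph V) (w : Sym2 V → ℝ) (u : V) : pathMax G w u u = 0 := by
  have isPath_iff (p : G.Walk u u) : p.IsPath ↔ p = .nil :=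
    Walk.isPath_iff_nil.trans Walk.eq_nil_iff_nil.symm
  simp only [pathMax, walkMax, isPath_iff, exists_eq_left]
  simp

theorem pathMax_eq_sInf_reachable_sublevelGraph (huv : u ≠ v) :
    pathMax G w u v = sInf {t | (sublevelGraph G w t).Reachable u v} := by
  rw [pathMax, ← csInf_upperClosure]
  congr 1
  ext t
  simp only [SetLike.mem_coe, mem_upperClosure, Set.mem_ofPred_eq,
    reachable_sublevelGraph_iff_exists_isPath, ← walkMax_le_iff (Walk.not_nil_of_ne huv)]
  grind

theorem pathMax_eq_of_reachable_sublevelGraph_eq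
    (h : ∀ t, (sublevelGraph H w' t).Reachable = (sublevelGraph G w t).Reachable) :
    pathMax H w' u v = pathMax G w u v := by
  rcases eq_or_ne u v with rfl | huv
  · rw [pathMax_self, pathMax_self]
  · simp only [pathMax_eq_sInf_reachable_sublevelGraph huv, h]

end PathMax

theorem tw_transformation_general {V : Type*} (G : SimpleGraph V)
    (w w' : Sym2 V → ℝ) (x y z : V) (hxz : x ≠ z)
    (haxy : G.Adj x y) (hayz : G.Adj y z) (hnxz : ¬ G.Adj x z)
    (hwge : w s(x, y) ≥ w s(y, z))
    (hw'new : w' s(x, z) = w s(x, y))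
    (hw'old : ∀ e : Sym2 V, e ≠ s(x, z) → w' e = w e) (u v : V) :
    ((twTransform G x y z).Reachable u v ↔ G.Reachable u v) ∧
      (G.Reachable u v → pathMax (twTransform G x y z) w' u v = pathMax G w u v) := by
  have sublevel := reachable_sublevelGraph_twTransform hxz haxy hayz hnxz hwge hw'new hw'old
  exact ⟨by rw [reachable_twTransform hxz haxy hayz],
    fun _ ↦ pathMax_eq_of_reachable_sublevelGraph_eq sublevel⟩

/-- The TW transformation: if `G.Adj x y`, `G.Adj y z`, `¬ G.Adj x z` and
`w {x,y} ≥ w {y,z}`, then replacing the edge `{x,y}` by the edge `{x,z}`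
(carrying the weight of `{x,y}`) preserves connectivity and path-max queries. -/
theorem tw_transformation {V : Type*} [Fintype V] (G : SimpleGraph V)
    (w w' : Sym2 V → ℝ) (x y z : V)
    (hxy : x ≠ y) (hyz : y ≠ z) (hxz : x ≠ z)
    (haxy : G.Adj x y) (hayz : G.Adj y z) (hnxz : ¬ G.Adj x z)
    (hwge : w s(x, y) ≥ w s(y, z))
    (hw'new : w' s(x, z) = w s(x, y))
    (hw'old : ∀ e : Sym2 V, e ≠ s(x, z) → w' e = w e) :
    ∀ u v : V,
      ((SimpleGraph.fromEdgeSet ((G.edgeSet \ {s(x, y)}) ∪ {s(x, z)})).Reachable u v ↔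
        G.Reachable u v) ∧
      (G.Reachable u v →
        pathMax (SimpleGraph.fromEdgeSet ((G.edgeSet \ {s(x, y)}) ∪ {s(x, z)})) w' u v =
          pathMax G w u v) := by
  exact tw_transformation_general G w w' x y z hxz haxy hayz hnxz hwge hw'new hw'old
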